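/- In the tied braid monoid TB_n^B of type B, for all 1 ≤ i, j ≤ n with i ≠ j one has η_{i,j} φ_i = φ_i φ_j = φ_j η_{i,j}, where η_{i,j} is the generalized tie joining the i-th and j-th moving strands and φ_i, φ_j are the generalized ties joining the fixed strand to the i-th, respectively j-th, moving strand. -/

import Mathlib

/-! The tied braid monoid of type B, `TBₙᴮ`, presented by generators and relations. -/

/-- Generators of the tied braid monoid of type B on `n` (moving) strands:
`sig i` is `σ_{i+1}`, `sigInv i` is `σ_{i+1}⁻¹`, `rho` is `ρ₁`, `rhoInv` is `ρ₁⁻¹`,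
`phi` is `φ₁` and `eta i` is `η_{i+1}` (for `i : Fin (n-1)`). -/
inductive TBGen (n : ℕ) : Type
  | sig : Fin (n - 1) → TBGen n
  | sigInv : Fin (n - 1) → TBGen n
  | rho : TBGen n
  | rhoInv : TBGen n
  | phi : TBGen n
  | eta : Fin (n - 1) → TBGen n

namespace TiedBraidB

variable (n : ℕ)

/-- The word `σᵢ` (for `1 ≤ i ≤ n-1`; junk value `1` otherwise). -/
def wσ (i : ℕ) : FreeMonoid (TBGen n) :=
  if h : 1 ≤ i ∧ i ≤ n - 1 then FreeMonoid.of (TBGen.sig ⟨i - 1, by omega⟩) else 1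

/-- The word `σᵢ⁻¹`. -/
def wσi (i : ℕ) : FreeMonoid (TBGen n) :=
  if h : 1 ≤ i ∧ i ≤ n - 1 then FreeMonoid.of (TBGen.sigInv ⟨i - 1, by omega⟩) else 1

/-- The word `ηᵢ`. -/
def wη (i : ℕ) : FreeMonoid (TBGen n) :=
  if h : 1 ≤ i ∧ i ≤ n - 1 then FreeMonoid.of (TBGen.eta ⟨i - 1, by omega⟩) else 1

/-- The word `ρ₁`. -/
def wρ : FreeMonoid (TBGen n) := FreeMonoid.of TBGen.rho

/-- The word `ρ₁⁻¹`. -/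
def wρi : FreeMonoid (TBGen n) := FreeMonoid.of TBGen.rhoInv

/-- The word `φ₁`. -/
def wφ : FreeMonoid (TBGen n) := FreeMonoid.of TBGen.phi

/-- The descending word `σₖ σₖ₋₁ ⋯ σ₁`. -/
def wσDesc : ℕ → FreeMonoid (TBGen n)
  | 0 => 1
  | k + 1 => wσ n (k + 1) * wσDesc k

/-- The ascending word `σ₁ σ₂ ⋯ σₖ`. -/
def wσAsc : ℕ → FreeMonoid (TBGen n)
  | 0 => 1
  | k + 1 => wσAsc k * wσ n (k + 1)

/-- The descending word `σₖ⁻¹ σₖ₋₁⁻¹ ⋯ σ₁⁻¹`. -/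
def wσiDesc : ℕ → FreeMonoid (TBGen n)
  | 0 => 1
  | k + 1 => wσi n (k + 1) * wσiDesc k

/-- The ascending word `σ₁⁻¹ σ₂⁻¹ ⋯ σₖ⁻¹`. -/
def wσiAsc : ℕ → FreeMonoid (TBGen n)
  | 0 => 1
  | k + 1 => wσiAsc k * wσi n (k + 1)

/-- The defining relations of the tied braid monoid `TBₙᴮ` of type B. -/
inductive tbRel : FreeMonoid (TBGen n) → FreeMonoid (TBGen n) → Prop
  | sig_inv (i : ℕ) (h1 : 1 ≤ i) (h2 : i ≤ n - 1) :
      tbRel (wσ n i * wσi n i) 1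
  | inv_sig (i : ℕ) (h1 : 1 ≤ i) (h2 : i ≤ n - 1) :
      tbRel (wσi n i * wσ n i) 1
  | rho_inv : tbRel (wρ n * wρi n) 1
  | inv_rho : tbRel (wρi n * wρ n) 1
  | sig_comm (i j : ℕ) (h1 : 1 ≤ i) (h2 : i + 1 < j) (h3 : j ≤ n - 1) :
      tbRel (wσ n i * wσ n j) (wσ n j * wσ n i)
  | sig_braid (i : ℕ) (h1 : 1 ≤ i) (h2 : i + 1 ≤ n - 1) :
      tbRel (wσ n i * wσ n (i + 1) * wσ n i) (wσ n (i + 1) * wσ n i * wσ n (i + 1))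
  | rho_sig (i : ℕ) (h1 : 2 ≤ i) (h2 : i ≤ n - 1) :
      tbRel (wρ n * wσ n i) (wσ n i * wρ n)
  | rho_sig_rho_sig (h : 2 ≤ n) :
      tbRel (wρ n * wσ n 1 * wρ n * wσ n 1) (wσ n 1 * wρ n * wσ n 1 * wρ n)
  | eta_comm (i j : ℕ) (h1 : 1 ≤ i) (h2 : i ≤ n - 1) (h3 : 1 ≤ j) (h4 : j ≤ n - 1) :
      tbRel (wη n i * wη n j) (wη n j * wη n i)
  | eta_sig (i : ℕ) (h1 : 1 ≤ i) (h2 : i ≤ n - 1) :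
      tbRel (wη n i * wσ n i) (wσ n i * wη n i)
  | eta_sig_far (i j : ℕ) (h1 : 1 ≤ i) (h2 : i ≤ n - 1) (h3 : 1 ≤ j) (h4 : j ≤ n - 1)
      (h5 : i + 1 < j ∨ j + 1 < i) :
      tbRel (wη n i * wσ n j) (wσ n j * wη n i)
  | eta_sig_sig (i j : ℕ) (h1 : 1 ≤ i) (h2 : i ≤ n - 1) (h3 : 1 ≤ j) (h4 : j ≤ n - 1)
      (h5 : j = i + 1 ∨ i = j + 1) :
      tbRel (wη n i * wσ n j * wσ n i) (wσ n j * wσ n i * wη n j)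
  | eta_sig_sigInv (i j : ℕ) (h1 : 1 ≤ i) (h2 : i ≤ n - 1) (h3 : 1 ≤ j) (h4 : j ≤ n - 1)
      (h5 : j = i + 1 ∨ i = j + 1) :
      tbRel (wη n i * wσ n j * wσi n i) (wσ n j * wσi n i * wη n j)
  | eta_eta_sig (i j : ℕ) (h1 : 1 ≤ i) (h2 : i ≤ n - 1) (h3 : 1 ≤ j) (h4 : j ≤ n - 1)
      (h5 : j = i + 1 ∨ i = j + 1) :
      tbRel (wη n i * wη n j * wσ n i) (wσ n i * wη n i * wη n j)
  | eta_eta_sig' (i j : ℕ) (h1 : 1 ≤ i) (h2 : i ≤ n - 1) (h3 : 1 ≤ j) (h4 : j ≤ n - 1)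
      (h5 : j = i + 1 ∨ i = j + 1) :
      tbRel (wη n i * wη n j * wσ n i) (wη n j * wσ n i * wη n j)
  | eta_idem (i : ℕ) (h1 : 1 ≤ i) (h2 : i ≤ n - 1) :
      tbRel (wη n i * wη n i) (wη n i)
  | phi_idem : tbRel (wφ n * wφ n) (wφ n)
  | rho_eta (i : ℕ) (h1 : 1 ≤ i) (h2 : i ≤ n - 1) :
      tbRel (wρ n * wη n i) (wη n i * wρ n)
  | rho_phi : tbRel (wρ n * wφ n) (wφ n * wρ n)
  | phi_eta (i : ℕ) (h1 : 1 ≤ i) (h2 : i ≤ n - 1) :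
      tbRel (wφ n * wη n i) (wη n i * wφ n)
  | phi_sig (i : ℕ) (h1 : 2 ≤ i) (h2 : i ≤ n - 1) :
      tbRel (wφ n * wσ n i) (wσ n i * wφ n)
  | phi_move (i : ℕ) (h1 : 2 ≤ i) (h2 : i ≤ n) :
      tbRel (wσDesc n (i - 1) * wφ n * wσiAsc n (i - 1))
        (wσiDesc n (i - 1) * wφ n * wσAsc n (i - 1))
  | phi_eta_one (h : 2 ≤ n) :
      tbRel (wφ n * wη n 1) (wφ n * wσ n 1 * wφ n * wσi n 1)
  | phi_eta_one' (h : 2 ≤ n) :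
      tbRel (wφ n * wσ n 1 * wφ n * wσi n 1) (wσ n 1 * wφ n * wσi n 1 * wη n 1)

/-- The tied braid monoid of type B on `n` strands. -/
def TB : Type := (conGen (tbRel n)).Quotient

instance : Monoid (TB n) := inferInstanceAs (Monoid (conGen (tbRel n)).Quotient)

/-- The canonical projection from the free monoid on the generators onto `TBₙᴮ`. -/
def mk : FreeMonoid (TBGen n) →* TB n := Con.mk' _

/-- The generator `σᵢ` of `TBₙᴮ`. -/
def σB (i : ℕ) : TB n := mk n (wσ n i)

/-- The generator `σᵢ⁻¹` of `TBₙᴮ`. -/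
def σiB (i : ℕ) : TB n := mk n (wσi n i)

/-- The generator `ρ₁` of `TBₙᴮ`. -/
def ρB : TB n := mk n (wρ n)

/-- The generator `ρ₁⁻¹` of `TBₙᴮ`. -/
def ρiB : TB n := mk n (wρi n)

/-- The generator `φ₁` of `TBₙᴮ`. -/
def φB : TB n := mk n (wφ n)

/-- The generator `ηᵢ` of `TBₙᴮ`. -/
def ηB (i : ℕ) : TB n := mk n (wη n i)

/-- The word `σᵢ σᵢ₊₁ ⋯ σₖ` (empty if `k < i`). -/
def wσRange (i k : ℕ) : FreeMonoid (TBGen n) :=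
  ((List.range' i (k + 1 - i)).map (wσ n)).prod

/-- The word `σₖ⁻¹ σₖ₋₁⁻¹ ⋯ σᵢ⁻¹` (empty if `k < i`). -/
def wσiRangeRev (i k : ℕ) : FreeMonoid (TBGen n) :=
  ((List.range' i (k + 1 - i)).reverse.map (wσi n)).prod

/-- The word representing the generalized tie `η_{i,j}`:
`σᵢ ⋯ σ_{j-2} η_{j-1} σ_{j-2}⁻¹ ⋯ σᵢ⁻¹` for `i < j`, with the conventions
`η_{i,i} = 1` and `η_{j,i} = η_{i,j}`. -/
def wηg (i j : ℕ) : FreeMonoid (TBGen n) :=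
  if i = j then 1
  else wσRange n (min i j) (max i j - 2) * wη n (max i j - 1) *
    wσiRangeRev n (min i j) (max i j - 2)

/-- The word representing the generalized tie `φⱼ = σ_{j-1} ⋯ σ₁ φ₁ σ₁⁻¹ ⋯ σ_{j-1}⁻¹`. -/
def wφg (j : ℕ) : FreeMonoid (TBGen n) :=
  wσDesc n (j - 1) * wφ n * wσiAsc n (j - 1)

/-- The generalized tie `η_{i,j}` joining the `i`-th and `j`-th moving strands. -/
def ηg (i j : ℕ) : TB n := mk n (wηg n i j)

/-- The generalized tie `φⱼ` joining the fixed strand and the `j`-th moving strand. -/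
def φg (j : ℕ) : TB n := mk n (wφg n j)

end TiedBraidB

/-!
The units of `TBₙᴮ` act on it by conjugation. The braid generators permute the ties `φⱼ` under this
action: `σₖ` exchanges `φₖ` and `φₖ₊₁` and fixes the others. They move the ties `η_{i,j}`
compatibly, so every triple `(η_{i,j}, φᵢ, φⱼ)` with `i ≠ j` is a simultaneous conjugate of
`(η₁, φ₁, φ₂)`. For the latter triple the claim is read off the defining relations, and conjugation
is multiplicative.
-/

namespace TiedBraidB

theorem conjAct_units_smul_eq_iff {M : Type*} [Monoid M] (g : ConjAct Mˣ) (x y : M) :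
    g • x = y ↔ (↑(ConjAct.ofConjAct g) : M) * x = y * (↑(ConjAct.ofConjAct g) : M) := by
  rw [ConjAct.units_smul_def, Units.mul_inv_eq_iff_eq_mul]

variable {n i j k l : ℕ}

theorem mk_eq_mk_of_tbRel {a b : FreeMonoid (TBGen n)} (h : tbRel n a b) : mk n a = mk n b :=
  (Con.eq _).2 (ConGen.Rel.of _ _ h)

theorem σB_mul_σiB (n i : ℕ) : σB n i * σiB n i = 1 := by
  by_cases h : 1 ≤ i ∧ i ≤ n - 1
  · exact mk_eq_mk_of_tbRel (tbRel.sig_inv i h.1 h.2)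
  · simp only [σB, σiB, wσ, wσi, dif_neg h, map_one, mul_one]

theorem σiB_mul_σB (n i : ℕ) : σiB n i * σB n i = 1 := by
  by_cases h : 1 ≤ i ∧ i ≤ n - 1
  · exact mk_eq_mk_of_tbRel (tbRel.inv_sig i h.1 h.2)
  · simp only [σB, σiB, wσ, wσi, dif_neg h, map_one, mul_one]

/-- The generator `σᵢ` as an element of the group of units of `TBₙᴮ` acting by conjugation, so that
`σConj n i • x` is `σᵢ x σᵢ⁻¹`. It is trivial for `i` outside `1, …, n - 1`, where `σB n i = 1`. -/
def σConj (n i : ℕ) : ConjAct (TB n)ˣ :=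
  ConjAct.toConjAct ⟨σB n i, σiB n i, σB_mul_σiB n i, σiB_mul_σB n i⟩

theorem σConj_smul (x : TB n) : σConj n i • x = σB n i * x * σiB n i := rfl

theorem σConj_inv_smul (x : TB n) : (σConj n i)⁻¹ • x = σiB n i * x * σB n i := rfl

theorem σConj_smul_eq_iff {x y : TB n} : σConj n i • x = y ↔ σB n i * x = y * σB n i :=
  conjAct_units_smul_eq_iff _ x y

theorem σConj_smul_comm (hi : 1 ≤ i) (hij : i + 1 < j) (hj : j < n) (x : TB n) :
    σConj n i • σConj n j • x = σConj n j • σConj n i • x := by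
  have hcomm : σConj n i * σConj n j = σConj n j * σConj n i :=
    Units.ext (mk_eq_mk_of_tbRel (tbRel.sig_comm i j hi hij (by omega)))
  rw [smul_smul, hcomm, mul_smul]

theorem σConj_braid (hi : 1 ≤ i) (hn : i + 1 < n) :
    σConj n i * σConj n (i + 1) * σConj n i = σConj n (i + 1) * σConj n i * σConj n (i + 1) :=
  Units.ext (mk_eq_mk_of_tbRel (tbRel.sig_braid i hi (by omega)))

theorem φg_one (n : ℕ) : φg n 1 = φB n := by
  simp [φg, wφg, wσDesc, wσiAsc, φB]

theorem σConj_smul_φg_self (hk : 1 ≤ k) : σConj n k • φg n k = φg n (k + 1) := by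
  obtain ⟨m, rfl⟩ := Nat.exists_eq_add_of_le' hk
  rw [σConj_smul]
  simp [φg, wφg, wσDesc, wσiAsc, σB, σiB, mul_assoc]

theorem φg_eq_mk_wσiDesc_mul_wφ_mul_wσAsc (hk : 1 ≤ k) (hkn : k ≤ n) :
    φg n k = mk n (wσiDesc n (k - 1) * wφ n * wσAsc n (k - 1)) := by
  obtain rfl | hk := hk.eq_or_lt
  · rfl
  · exact mk_eq_mk_of_tbRel (tbRel.phi_move k hk hkn)

theorem σConj_inv_smul_φg_self (hk : 1 ≤ k) (hkn : k < n) :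
    (σConj n k)⁻¹ • φg n k = φg n (k + 1) := by
  rw [φg_eq_mk_wσiDesc_mul_wφ_mul_wσAsc hk hkn.le, φg_eq_mk_wσiDesc_mul_wφ_mul_wσAsc k.succ_pos hkn]
  obtain ⟨m, rfl⟩ := Nat.exists_eq_add_of_le' hk
  rw [σConj_inv_smul]
  simp [wσiDesc, wσAsc, σB, σiB, mul_assoc]

theorem σConj_smul_φg_succ (hk : 1 ≤ k) (hkn : k < n) : σConj n k • φg n (k + 1) = φg n k := by
  rw [← σConj_inv_smul_φg_self hk hkn, smul_inv_smul]

theorem σConj_smul_φg_of_lt (hj : 1 ≤ j) (hjk : j < k) (hkn : k < n) :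
    σConj n k • φg n j = φg n j := by
  induction j, hj using Nat.le_induction with
  | base =>
    rw [φg_one, σConj_smul_eq_iff]
    exact (mk_eq_mk_of_tbRel (tbRel.phi_sig k hjk (by omega))).symm
  | succ j hj ih =>
    rw [← σConj_smul_φg_self hj, ← σConj_smul_comm hj hjk hkn, ih (by omega)]

theorem σConj_smul_φg_add_two (hk : 1 ≤ k) (hkn : k + 2 ≤ n) :
    σConj n k • φg n (k + 2) = φg n (k + 2) := by
  have φg_add_two : φg n (k + 2) = (σConj n (k + 1) * σConj n k) • φg n k := by
    rw [mul_smul, σConj_smul_φg_self hk, σConj_smul_φg_self k.succ_pos]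
  calc σConj n k • φg n (k + 2)
      = (σConj n k * σConj n (k + 1) * σConj n k) • φg n k := by
        rw [φg_add_two, smul_smul, mul_assoc]
    _ = (σConj n (k + 1) * σConj n k) • σConj n (k + 1) • φg n k := by
        rw [σConj_braid hk hkn, mul_smul]
    _ = φg n (k + 2) := by
        rw [σConj_smul_φg_of_lt hk k.lt_succ_self hkn, φg_add_two]

theorem σConj_smul_φg_of_add_two_le (hk : 1 ≤ k) (hkj : k + 2 ≤ j) (hjn : j ≤ n) :
    σConj n k • φg n j = φg n j := by
  induction j, hkj using Nat.le_induction with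
  | base => exact σConj_smul_φg_add_two hk hjn
  | succ j hkj ih =>
    rw [← σConj_smul_φg_self (by omega), σConj_smul_comm hk hkj hjn, ih (by omega)]

theorem ηg_comm (n i j : ℕ) : ηg n i j = ηg n j i := by
  simp only [ηg, wηg, min_comm i j, max_comm i j, eq_comm (a := i) (b := j)]

theorem ηg_succ (hi : 1 ≤ i) : ηg n i (i + 1) = ηB n i := by
  have range_length : i - 1 + 1 - i = 0 := by omega
  simp [ηg, wηg, wσRange, wσiRangeRev, ηB, range_length]

theorem σConj_smul_ηg_succ_left (hij : i + 2 ≤ j) :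
    σConj n i • ηg n (i + 1) j = ηg n i j := by
  rw [σConj_smul]
  have range_length : j - 2 + 1 - i = j - 2 + 1 - (i + 1) + 1 := by omega
  have hlt : i < j := by omega
  have hlt' : i + 1 < j := hij
  simp only [ηg, wηg, wσRange, wσiRangeRev, if_neg hlt.ne, if_neg hlt'.ne, min_eq_left hlt.le,
    min_eq_left hlt'.le, max_eq_right hlt.le, max_eq_right hlt'.le, range_length,
    List.range'_succ]
  simp [σB, σiB, mul_assoc]

theorem σConj_smul_ηB_self (hi : 1 ≤ i) (hin : i < n) : σConj n i • ηB n i = ηB n i :=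
  σConj_smul_eq_iff.2 (mk_eq_mk_of_tbRel (tbRel.eta_sig i hi (by omega))).symm

theorem σConj_mul_σConj_succ_smul_ηB (hi : 1 ≤ i) (hin : i + 1 < n) :
    (σConj n i * σConj n (i + 1)) • ηB n i = ηB n (i + 1) := by
  have hη : ηB n (i + 1) * σB n i * σB n (i + 1) = σB n i * σB n (i + 1) * ηB n i :=
    mk_eq_mk_of_tbRel
      (tbRel.eta_sig_sig (i + 1) i i.succ_pos (by omega) hi (by omega) (.inr rfl))
  rw [mul_assoc] at hη
  exact (conjAct_units_smul_eq_iff _ _ _).2 hη.symm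

section TieTriple

/-- The triple `(η_{i,j}, φᵢ, φⱼ)` of the three ties among the fixed strand and the moving strands
`i` and `j`. Units of `TBₙᴮ` act on such triples by simultaneous conjugation. -/
def tieTriple (n i j : ℕ) : TB n × TB n × TB n := (ηg n i j, φg n i, φg n j)

theorem σConj_mul_σConj_succ_smul_tieTriple (hi : 1 ≤ i) (hin : i + 1 < n) :
    (σConj n i * σConj n (i + 1)) • tieTriple n i (i + 1) = tieTriple n (i + 1) (i + 2) := by
  have hη : (σConj n i * σConj n (i + 1)) • ηg n i (i + 1) = ηg n (i + 1) (i + 2) := by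
    rw [ηg_succ hi, ηg_succ i.succ_pos, σConj_mul_σConj_succ_smul_ηB hi hin]
  have hφ_left : (σConj n i * σConj n (i + 1)) • φg n i = φg n (i + 1) := by
    rw [mul_smul, σConj_smul_φg_of_lt hi i.lt_succ_self hin, σConj_smul_φg_self hi]
  have hφ_right : (σConj n i * σConj n (i + 1)) • φg n (i + 1) = φg n (i + 2) := by
    rw [mul_smul, σConj_smul_φg_self i.succ_pos, σConj_smul_φg_add_two hi hin]
  rw [tieTriple, Prod.smul_mk, Prod.smul_mk, hη, hφ_left, hφ_right, tieTriple]

theorem σConj_smul_tieTriple_succ_left (hi : 1 ≤ i) (hij : i + 2 ≤ j) (hjn : j ≤ n) :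
    σConj n i • tieTriple n (i + 1) j = tieTriple n i j := by
  rw [tieTriple, Prod.smul_mk, Prod.smul_mk, σConj_smul_ηg_succ_left hij,
    σConj_smul_φg_succ hi (by omega), σConj_smul_φg_of_add_two_le hi hij hjn, tieTriple]

theorem σConj_smul_tieTriple_swap (hi : 1 ≤ i) (hin : i < n) :
    σConj n i • tieTriple n i (i + 1) = tieTriple n (i + 1) i := by
  rw [tieTriple, Prod.smul_mk, Prod.smul_mk, ηg_succ hi, σConj_smul_ηB_self hi hin,
    σConj_smul_φg_self hi, σConj_smul_φg_succ hi hin, tieTriple, ηg_comm, ηg_succ hi]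

open MulAction

theorem tieTriple_succ_mem_orbit (hi : 1 ≤ i) (hin : i < n) :
    tieTriple n i (i + 1) ∈ orbit (ConjAct (TB n)ˣ) (tieTriple n 1 2) := by
  induction i, hi using Nat.le_induction with
  | base => exact mem_orbit_self _
  | succ i hi ih =>
    rw [← σConj_mul_σConj_succ_smul_tieTriple hi hin]
    exact mem_orbit_of_mem_orbit _ (ih (by omega))

theorem tieTriple_mem_orbit_of_lt (hi : 1 ≤ i) (hij : i < j) (hjn : j ≤ n) :
    tieTriple n i j ∈ orbit (ConjAct (TB n)ˣ) (tieTriple n 1 2) := by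
  obtain ⟨m, rfl⟩ := Nat.exists_eq_add_one_of_ne_zero (Nat.ne_zero_of_lt hij)
  induction Nat.le_of_lt_succ hij using Nat.decreasingInduction with
  | self => exact tieTriple_succ_mem_orbit hi hjn
  | of_succ i him ih =>
    rw [← σConj_smul_tieTriple_succ_left hi (by omega) hjn]
    exact mem_orbit_of_mem_orbit _ (ih (by omega) (by omega))

theorem tieTriple_swap_mem_orbit
    (h : tieTriple n i j ∈ orbit (ConjAct (TB n)ˣ) (tieTriple n k l)) :
    tieTriple n j i ∈ orbit (ConjAct (TB n)ˣ) (tieTriple n l k) := by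
  obtain ⟨g, hg⟩ := h
  simp only [tieTriple, Prod.smul_mk, Prod.mk.injEq] at hg
  obtain ⟨hη, hφ_left, hφ_right⟩ := hg
  refine ⟨g, ?_⟩
  simp only [tieTriple, Prod.smul_mk]
  rw [ηg_comm n l k, hη, hφ_left, hφ_right, ηg_comm]

theorem tieTriple_mem_orbit (hi : 1 ≤ i) (hin : i ≤ n) (hj : 1 ≤ j) (hjn : j ≤ n) (hij : i ≠ j) :
    tieTriple n i j ∈ orbit (ConjAct (TB n)ˣ) (tieTriple n 1 2) := by
  obtain hij | hji := hij.lt_or_gt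
  · exact tieTriple_mem_orbit_of_lt hi hij hjn
  · have orbit_eq : orbit (ConjAct (TB n)ˣ) (tieTriple n 2 1) =
        orbit (ConjAct (TB n)ˣ) (tieTriple n 1 2) := by
      rw [← σConj_smul_tieTriple_swap le_rfl (by omega), orbit_smul]
    exact orbit_eq ▸ tieTriple_swap_mem_orbit (tieTriple_mem_orbit_of_lt hj hji hin)

end TieTriple

theorem tie_phi_products_one_two (hn : 2 ≤ n) :
    ηg n 1 2 * φg n 1 = φg n 1 * φg n 2 ∧ φg n 1 * φg n 2 = φg n 2 * ηg n 1 2 := by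
  have φg_two : φg n 2 = σB n 1 * φB n * σiB n 1 := by
    rw [← σConj_smul_φg_self le_rfl, φg_one, σConj_smul]
  have φη_comm : φB n * ηB n 1 = ηB n 1 * φB n :=
    mk_eq_mk_of_tbRel (tbRel.phi_eta 1 le_rfl (by omega))
  have φη_eq : φB n * ηB n 1 = φB n * σB n 1 * φB n * σiB n 1 :=
    mk_eq_mk_of_tbRel (tbRel.phi_eta_one hn)
  have φφ_eq : φB n * σB n 1 * φB n * σiB n 1 = σB n 1 * φB n * σiB n 1 * ηB n 1 :=
    mk_eq_mk_of_tbRel (tbRel.phi_eta_one' hn)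
  simp only [mul_assoc] at φη_eq φφ_eq
  rw [ηg_succ le_rfl, φg_one, φg_two, ← φη_comm]
  simp only [mul_assoc]
  exact ⟨φη_eq, φφ_eq⟩

end TiedBraidB

open TiedBraidB in
/-- In `TBₙᴮ`, for all `1 ≤ i, j ≤ n` with `i ≠ j` one has
`η_{i,j} φᵢ = φᵢ φⱼ = φⱼ η_{i,j}`. -/
theorem tie_phi_products (n i j : ℕ) (hi1 : 1 ≤ i) (hi2 : i ≤ n)
    (hj1 : 1 ≤ j) (hj2 : j ≤ n) (hij : i ≠ j) :
    ηg n i j * φg n i = φg n i * φg n j ∧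
    φg n i * φg n j = φg n j * ηg n i j := by
  have ⟨g, hg⟩ := tieTriple_mem_orbit hi1 hi2 hj1 hj2 hij
  simp only [tieTriple, Prod.smul_mk, Prod.mk.injEq] at hg
  obtain ⟨hη, hφ_left, hφ_right⟩ := hg
  have ⟨ηφ_eq, φφ_eq⟩ := tie_phi_products_one_two (n := n) (by omega)
  rw [← hη, ← hφ_left, ← hφ_right]
  simp only [← smul_mul', ηφ_eq, φφ_eq, and_self]
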